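/- For every Carnot group G, the zero horizontal vector 0 ∈ 𝔊_H is pliable: for every ε > 0, the set {β(1) ∈ G : β ∈ C¹_H([0,1], G), ‖β'‖_∞ < ε, (β, β')(0) = (0_G, 0)} is a neighborhood of 0_G in G, and moreover one may additionally require β'(1) = 0. -/

import Mathlib

open Filter Topology Set Metric

variable {G : Type*} [Group G] [MetricSpace G]
variable {H : Type*} [NormedAddCommGroup H] [NormedSpace ℝ H]

/-- `γ` is a curve of class `C¹_H` on `s` with (horizontal) velocity `γ'`. -/
def IsC1H (expMap : H → G) (γ : ℝ → G) (γ' : ℝ → H) (s : Set ℝ) : Prop :=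
  ContinuousOn γ s ∧ ContinuousOn γ' s ∧
    ∀ t ∈ s, Tendsto (fun u => dist (γ u) (γ t * expMap ((u - t) • γ' t)) / |u - t|)
      (𝓝[s \ {t}] t) (𝓝 0)

/-!
Once straight segments `s ↦ exp (s v)` satisfy `f s := dist 1 (exp (s v)) = O(s)`, the chain rule
makes every `C¹` reparametrisation of a segment horizontal of class `C¹`. Traversing each segment of
a piecewise straight curve so that it starts and ends at rest makes the concatenation `C¹` as well,
and the curve can then wait at its endpoint until time `1`.

The bound `f s = O(s)` is forced by the existence of flows. A curve `γ` with velocity `c(t) v`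
satisfies `|dist (γ u) (γ u') - f ((u - u') c(u))| ≤ |u - u'|` for `u'` close to `u`, and Baire's
theorem makes this uniform for `u, u'` in some interval. Exchanging `u` and `u'`, we find that
`f ((u - u') c(u))` and `f ((u - u') c(u'))` differ by at most `2 |u - u'|`. Baire's theorem in the
space of bounded profiles `c` gives one interval that works for all profiles in a ball, where `c(u)`
and `c(u')` can be prescribed independently; hence `|f s - f (q s)| = O(s)` for some `|q| < 1`.
Summing over `s, q s, q² s, …` gives the bound.
-/

open Asymptotics TopologicalSpace
open scoped BoundedContinuousFunction

section Baire

lemma exists_isOpen_prod_self_subset_of_isClosed {X : Type*} [PseudoMetricSpace X] [BaireSpace X]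
    [Nonempty X] {C : Set (X × X)} (hC : IsClosed C) (h : ∀ x, ∀ᶠ y in 𝓝 x, (x, y) ∈ C) :
    ∃ U : Set X, IsOpen U ∧ U.Nonempty ∧ U ×ˢ U ⊆ C := by
  let E : ℕ → Set X := fun n => {x | ∀ y, 1 / (n + 1 : ℝ) ≤ dist y x ∨ (x, y) ∈ C}
  have hE : ∀ n, IsClosed (E n) := fun n => by
    simp only [E, ofPred_forall, ofPred_or]
    exact isClosed_iInter fun y =>
      (isClosed_le (by fun_prop) (by fun_prop)).union (hC.preimage (by fun_prop))
  have hcover : ⋃ n, E n = univ := eq_univ_of_forall fun x => by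
    obtain ⟨r, hr, hball⟩ := Metric.eventually_nhds_iff.1 (h x)
    obtain ⟨n, hn⟩ := exists_nat_one_div_lt hr
    exact mem_iUnion.2 ⟨n, fun y => (le_or_gt _ _).imp_right fun hy => hball (hy.trans hn)⟩
  obtain ⟨n, x, hx⟩ := nonempty_interior_of_iUnion_of_closed hE hcover
  have hn : (0 : ℝ) < 1 / (n + 1) := by positivity
  refine ⟨interior (E n) ∩ ball x (1 / (n + 1) / 2), isOpen_interior.inter isOpen_ball,
    ⟨x, hx, mem_ball_self (half_pos hn)⟩, ?_⟩
  rintro ⟨y, z⟩ ⟨⟨hyE, hy⟩, -, hz⟩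
  refine (interior_subset hyE z).resolve_left (not_le.2 ?_)
  calc dist z y ≤ dist z x + dist y x := dist_triangle_right z y x
    _ < 1 / (n + 1) / 2 + 1 / (n + 1) / 2 := add_lt_add hz hy
    _ = 1 / (n + 1) := add_halves _

lemma exists_isOpen_nonempty_interior_of_antitone {X Y : Type*} [TopologicalSpace X]
    [SecondCountableTopology X] [TopologicalSpace Y] [BaireSpace Y] [Nonempty Y]
    {A : Set X → Set Y} (hclosed : ∀ U, IsClosed (A U)) (hanti : Antitone A)
    (hcover : ∀ y, ∃ U, IsOpen U ∧ U.Nonempty ∧ y ∈ A U) :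
    ∃ U, IsOpen U ∧ U.Nonempty ∧ (interior (A U)).Nonempty := by
  have : Countable (countableBasis X) := (countable_countableBasis X).to_subtype
  have hunion : ⋃ U : countableBasis X, A U = univ := eq_univ_of_forall fun y => by
    obtain ⟨U, hU, ⟨x, hx⟩, hy⟩ := hcover y
    obtain ⟨B, hB, -, hBU⟩ := (isBasis_countableBasis X).exists_subset_of_mem_open hx hU
    exact mem_iUnion.2 ⟨⟨B, hB⟩, hanti hBU hy⟩
  obtain ⟨⟨B, hB⟩, hint⟩ := nonempty_interior_of_iUnion_of_closed (fun U => hclosed _) hunion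
  exact ⟨B, isOpen_of_mem_countableBasis hB, nonempty_of_mem_countableBasis hB, hint⟩

end Baire

section Lipschitz

lemma isBigO_dist_apply_zero_of_dist_smul_le {𝕜 E X : Type*} [NormedField 𝕜]
    [SeminormedAddCommGroup E] [NormedSpace 𝕜 E] [PseudoMetricSpace X] {f : E → X}
    (hf : ContinuousAt f 0) {q : 𝕜} (hq : ‖q‖ < 1) {K : ℝ}
    (h : ∀ᶠ s in 𝓝 0, dist (f s) (f (q • s)) ≤ K * ‖s‖) :
    (fun s => dist (f s) (f 0)) =O[𝓝 0] fun s => s := by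
  obtain ⟨r, hr, hball⟩ := eventually_nhds_iff_ball.1 h
  refine IsBigO.of_bound (K / (1 - ‖q‖)) ?_
  filter_upwards [ball_mem_nhds 0 hr] with s hs
  have hstep (n : ℕ) : dist (f (q ^ n • s)) (f (q ^ (n + 1) • s)) ≤ K * ‖s‖ * ‖q‖ ^ n := by
    have hmem : q ^ n • s ∈ ball (0 : E) r := by
      rw [mem_ball_zero_iff] at hs ⊢
      rw [norm_smul, norm_pow]
      exact (mul_le_of_le_one_left (norm_nonneg s) (pow_le_one₀ (norm_nonneg q) hq.le)).trans_lt hs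
    calc dist (f (q ^ n • s)) (f (q ^ (n + 1) • s))
        = dist (f (q ^ n • s)) (f (q • q ^ n • s)) := by rw [pow_succ', mul_smul]
      _ ≤ K * ‖q ^ n • s‖ := hball _ hmem
      _ = K * ‖s‖ * ‖q‖ ^ n := by rw [norm_smul, norm_pow]; ring
  have hlim : Tendsto (fun n : ℕ => f (q ^ n • s)) atTop (𝓝 (f 0)) := by
    refine hf.tendsto.comp ?_
    simpa only [zero_smul] using (tendsto_pow_atTop_nhds_zero_of_norm_lt_one hq).smul_const s
  have hdist := dist_le_of_le_geometric_of_tendsto₀ ‖q‖ (K * ‖s‖) hq hstep hlim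
  rw [pow_zero, one_smul] at hdist
  rwa [Real.norm_of_nonneg dist_nonneg, div_mul_eq_mul_div]

lemma exists_dist_le_apply_eq_apply_eq {X E : Type*} [TopologicalSpace X] [T4Space X]
    [NormedAddCommGroup E] [NormedSpace ℝ E] (c : X →ᵇ E) {u u' : X} (hne : u ≠ u') (x : E) :
    ∃ d : X →ᵇ E, dist d c ≤ ‖x - c u‖ ∧ d u = x ∧ d u' = c u' := by
  obtain ⟨φ, hφu', hφu, hφ⟩ := exists_continuous_zero_one_of_isClosed
    (isClosed_singleton (x := u')) (isClosed_singleton (x := u)) (by simpa using hne.symm)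
  let p : X →ᵇ E := .ofNormedAddCommGroup (fun s => φ s • (x - c u)) (by fun_prop) ‖x - c u‖
    fun s => by
      rw [norm_smul, Real.norm_of_nonneg (hφ s).1]
      exact mul_le_of_le_one_left (norm_nonneg _) (hφ s).2
  refine ⟨c + p, ?_, ?_, ?_⟩
  · rw [dist_self_add_left]
    exact BoundedContinuousFunction.norm_ofNormedAddCommGroup_le _ (norm_nonneg _) _
  · simp [p, hφu rfl]
  · simp [p, hφu' rfl]

variable {X : Type*} [PseudoMetricSpace X] {f : ℝ → X} {C : ℝ}

lemma exists_abs_lt_abs_eventually_dist_le_of_profiles (hf : Continuous f)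
    (h : ∀ c : ℝ →ᵇ ℝ, ∃ U : Set ℝ, IsOpen U ∧ U.Nonempty ∧ ∀ u ∈ U, ∀ u' ∈ U,
      dist (f ((u - u') * c u)) (f ((u - u') * c u')) ≤ C * |u - u'|) :
    ∃ x y : ℝ, |y| < |x| ∧ ∀ᶠ δ in 𝓝 0, dist (f (δ * x)) (f (δ * y)) ≤ C * |δ| := by
  let A : Set ℝ → Set (ℝ →ᵇ ℝ) := fun U => {c | ∀ u ∈ U, ∀ u' ∈ U,
    dist (f ((u - u') * c u)) (f ((u - u') * c u')) ≤ C * |u - u'|}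
  have hclosed : ∀ U, IsClosed (A U) := fun U => by
    simp only [A, ofPred_forall]
    refine isClosed_iInter fun u => isClosed_iInter fun _ => isClosed_iInter fun u' =>
      isClosed_iInter fun _ => isClosed_le ?_ continuous_const
    fun_prop
  have hanti : Antitone A := fun U V hUV c hc u hu u' hu' => hc u (hUV hu) u' (hUV hu')
  obtain ⟨U, hU, ⟨u₀, hu₀⟩, c, hc⟩ := exists_isOpen_nonempty_interior_of_antitone hclosed hanti h
  obtain ⟨r, hr, hball⟩ := isOpen_iff.1 isOpen_interior c hc
  set y := c u₀ with hy
  obtain ⟨x, hxy, hyx⟩ : ∃ x, |x - y| < r ∧ |y| < |x| := by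
    rcases le_total 0 y with h0 | h0
    · refine ⟨y + r / 2, by rw [add_sub_cancel_left, abs_of_pos] <;> linarith, ?_⟩
      rw [abs_of_nonneg h0, abs_of_pos] <;> linarith
    · refine ⟨y - r / 2, by rw [sub_sub_cancel_left, abs_of_neg] <;> linarith, ?_⟩
      rw [abs_of_nonpos h0, abs_of_neg] <;> linarith
  refine ⟨x, y, hyx, ?_⟩
  have hshift : Tendsto (fun δ => u₀ + δ) (𝓝 0) (𝓝 u₀) :=
    (continuous_const.add continuous_id).tendsto' _ _ (add_zero u₀)
  have hnear : ∀ᶠ u in 𝓝 u₀, |x - c u| < r :=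
    (continuous_const.sub c.continuous).abs.continuousAt.eventually_lt continuousAt_const hxy
  filter_upwards [hshift.eventually hnear, hshift.eventually (hU.mem_nhds hu₀)] with δ hδ hδU
  rcases eq_or_ne δ 0 with rfl | hne
  · simp
  obtain ⟨d, hdc, hdx, hdy⟩ := exists_dist_le_apply_eq_apply_eq c (u := u₀ + δ) (u' := u₀)
    (by simpa using hne) x
  have hdA : d ∈ A U := interior_subset (hball (mem_ball.2 (hdc.trans_lt hδ)))
  simpa [hdx, hdy, hy] using hdA (u₀ + δ) hδU u₀ hu₀

lemma isBigO_dist_apply_zero_of_profiles (hf : Continuous f)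
    (h : ∀ c : ℝ →ᵇ ℝ, ∃ U : Set ℝ, IsOpen U ∧ U.Nonempty ∧ ∀ u ∈ U, ∀ u' ∈ U,
      dist (f ((u - u') * c u)) (f ((u - u') * c u')) ≤ C * |u - u'|) :
    (fun s => dist (f s) (f 0)) =O[𝓝 0] fun s => s := by
  obtain ⟨x, y, hyx, hxy⟩ := exists_abs_lt_abs_eventually_dist_le_of_profiles hf h
  have hx : 0 < |x| := (abs_nonneg y).trans_lt hyx
  have hx0 : x ≠ 0 := abs_pos.1 hx
  have hscale : Tendsto (fun s => s / x) (𝓝 0) (𝓝 0) :=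
    (continuous_id.div_const x).tendsto' _ _ (zero_div x)
  refine isBigO_dist_apply_zero_of_dist_smul_le hf.continuousAt (q := y / x) (K := C / |x|) ?_ ?_
  · rwa [Real.norm_eq_abs, abs_div, div_lt_one hx]
  · filter_upwards [hscale.eventually hxy] with s hs
    rwa [div_mul_cancel₀ s hx0, div_mul_comm, abs_div, mul_div_left_comm, mul_comm |s|] at hs

end Lipschitz

/-- `e : E → A` behaves like the exponential map of a Lie group: its restriction to each line
through the origin is a one-parameter subgroup of `A`. -/
def IsExpLike {E A : Type*} [AddCommGroup E] [Module ℝ E] [Group A] (e : E → A) : Prop :=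
  ∀ (s t : ℝ) (v : E), e ((s + t) • v) = e (s • v) * e (t • v)

namespace IsExpLike

lemma map_zero {E A : Type*} [AddCommGroup E] [Module ℝ E] [Group A] {e : E → A}
    (he : IsExpLike e) : e 0 = 1 := by
  simpa using he 0 0 0

variable {E A : Type*} [AddCommGroup E] [Module ℝ E] [Group A] [PseudoMetricSpace A]
  [IsIsometricSMul A A] {e : E → A}

lemma dist_smul_smul (he : IsExpLike e) (s t : ℝ) (v : E) :
    dist (e (s • v)) (e (t • v)) = dist 1 (e ((t - s) • v)) := by
  conv_lhs => rw [← add_sub_cancel s t, he, ← mul_one (e (s • v)), mul_assoc, one_mul]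
  exact dist_mul_left _ _ _

lemma dist_one_neg_smul (he : IsExpLike e) (s : ℝ) (v : E) :
    dist 1 (e (-s • v)) = dist 1 (e (s • v)) := by
  simpa [he.map_zero, dist_comm] using (he.dist_smul_smul s 0 v).symm

lemma continuous_smul_const (he : IsExpLike e) {v : E}
    (h : Tendsto (fun s : ℝ => dist 1 (e (s • v))) (𝓝 0) (𝓝 0)) :
    Continuous fun s : ℝ => e (s • v) := by
  refine continuous_iff_continuousAt.2 fun t => tendsto_iff_dist_tendsto_zero.2 ?_
  simp only [he.dist_smul_smul]
  exact h.comp ((continuous_const.sub continuous_id).tendsto' _ _ (sub_self t))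

end IsExpLike

lemma piecewise_Iic_eqOn_Ici {α β : Type*} [LinearOrder α] {f g : α → β} {b : α} (h : f b = g b) :
    EqOn ((Iic b).piecewise f g) g (Ici b) := fun t ht => by
  rcases (mem_Ici.1 ht).eq_or_lt with rfl | hlt
  · rw [piecewise_eq_of_mem _ _ _ self_mem_Iic, h]
  · rw [piecewise_eq_of_notMem _ _ _ (notMem_Iic.2 hlt)]

namespace IsC1H

variable {expMap : H → G} {γ γ₁ γ₂ : ℝ → G} {γ' γ₁' γ₂' : ℝ → H} {s s₁ s₂ : Set ℝ}

lemma eventually_dist_le (h : IsC1H expMap γ γ' s) (h0 : expMap 0 = 1) {t : ℝ} (ht : t ∈ s) :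
    ∀ᶠ u in 𝓝[s] t, dist (γ u) (γ t * expMap ((u - t) • γ' t)) ≤ |u - t| := by
  have hlt := (h.2.2 t ht).eventually (gt_mem_nhds one_pos)
  rw [sdiff_eq, eventually_nhdsWithin_iff] at hlt
  rw [eventually_nhdsWithin_iff]
  filter_upwards [hlt] with u hu hus
  rcases eq_or_ne u t with rfl | hne
  · simp [h0]
  · exact ((div_lt_one (abs_pos.2 (sub_ne_zero.2 hne))).1 (hu ⟨hus, hne⟩)).le

lemma congr (h : IsC1H expMap γ₁ γ₁' s) (hγ : EqOn γ₂ γ₁ s) (hγ' : EqOn γ₂' γ₁' s) :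
    IsC1H expMap γ₂ γ₂' s := by
  refine ⟨h.1.congr hγ, h.2.1.congr hγ', fun t ht => (h.2.2 t ht).congr' ?_⟩
  filter_upwards [self_mem_nhdsWithin] with u hu
  rw [hγ ht, hγ' ht, hγ hu.1]

lemma union_of_isClosed (h₁ : IsC1H expMap γ γ' s₁) (h₂ : IsC1H expMap γ γ' s₂)
    (hs₁ : IsClosed s₁) (hs₂ : IsClosed s₂) : IsC1H expMap γ γ' (s₁ ∪ s₂) := by
  refine ⟨h₁.1.union_of_isClosed h₂.1 hs₁ hs₂, h₁.2.1.union_of_isClosed h₂.2.1 hs₁ hs₂,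
    fun t _ => ?_⟩
  have hbot {s : Set ℝ} (hs : IsClosed s) (ht : t ∉ s) : 𝓝[s \ {t}] t = ⊥ :=
    le_bot_iff.1 ((nhdsWithin_mono t sdiff_subset).trans_eq
      (notMem_closure_iff_nhdsWithin_eq_bot.1 (hs.closure_eq.symm ▸ ht)))
  rw [union_sdiff_distrib, nhdsWithin_union, tendsto_sup]
  constructor
  · by_cases ht : t ∈ s₁
    · exact h₁.2.2 t ht
    · exact hbot hs₁ ht ▸ tendsto_bot
  · by_cases ht : t ∈ s₂
    · exact h₂.2.2 t ht
    · exact hbot hs₂ ht ▸ tendsto_bot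

lemma piecewise_Iic {a b c : ℝ} (hab : a ≤ b) (hbc : b ≤ c) (h₁ : IsC1H expMap γ₁ γ₁' (Icc a b))
    (h₂ : IsC1H expMap γ₂ γ₂' (Icc b c)) (hγ : γ₁ b = γ₂ b) (hγ' : γ₁' b = γ₂' b) :
    IsC1H expMap ((Iic b).piecewise γ₁ γ₂) ((Iic b).piecewise γ₁' γ₂') (Icc a c) := by
  rw [← Icc_union_Icc_eq_Icc hab hbc]
  exact (h₁.congr ((piecewise_eqOn _ _ _).mono Icc_subset_Iic_self)
    ((piecewise_eqOn _ _ _).mono Icc_subset_Iic_self)).union_of_isClosed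
    (h₂.congr (piecewise_Iic_eqOn_Ici hγ |>.mono Icc_subset_Ici_self)
      (piecewise_Iic_eqOn_Ici hγ' |>.mono Icc_subset_Ici_self)) isClosed_Icc isClosed_Icc

lemma comp_sub_const (h : IsC1H expMap γ γ' s) (a : ℝ) :
    IsC1H expMap (fun u => γ (u - a)) (fun u => γ' (u - a)) ((· - a) ⁻¹' s) := by
  have hshift : Continuous fun u : ℝ => u - a := continuous_id.sub continuous_const
  refine ⟨h.1.comp hshift.continuousOn (mapsTo_preimage _ s),
    h.2.1.comp hshift.continuousOn (mapsTo_preimage _ s), fun t ht => ?_⟩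
  have hmaps : MapsTo (· - a) ((· - a) ⁻¹' s \ {t}) (s \ {t - a}) := fun u hu =>
    ⟨hu.1, fun h => hu.2 (sub_left_injective h)⟩
  have hlim := (h.2.2 (t - a) ht).comp
    (hshift.continuousWithinAt.tendsto_nhdsWithin hmaps)
  simpa only [Function.comp_def, sub_sub_sub_cancel_right] using hlim

lemma const_mul [IsIsometricSMul G G] (h : IsC1H expMap γ γ' s) (g : G) :
    IsC1H expMap (fun u => g * γ u) γ' s := by
  refine ⟨(isometry_smul G g).continuous.comp_continuousOn h.1, h.2.1, fun t ht => ?_⟩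
  simpa only [mul_assoc, dist_mul_left] using h.2.2 t ht

lemma const (h0 : expMap 0 = 1) (g : G) : IsC1H expMap (fun _ => g) (fun _ => 0) s := by
  refine ⟨continuousOn_const, continuousOn_const, fun t _ => ?_⟩
  simpa [h0] using tendsto_const_nhds

lemma tendsto_dist_one_smul [IsIsometricSMul G G] (h : IsC1H expMap γ γ' univ)
    (h0 : expMap 0 = 1) (t : ℝ) :
    Tendsto (fun s : ℝ => dist 1 (expMap (s • γ' t))) (𝓝 0) (𝓝 0) := by
  have hγ : Continuous γ := continuousOn_univ.1 h.1
  have hbound : Tendsto (fun s => dist (γ (t + s)) (γ t) + |s|) (𝓝 0) (𝓝 0) :=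
    Continuous.tendsto' (by fun_prop) _ _ (by simp)
  have hnear := h.eventually_dist_le h0 (mem_univ t)
  rw [nhdsWithin_univ] at hnear
  have hshift : Tendsto (fun s => t + s) (𝓝 0) (𝓝 t) :=
    (continuous_const.add continuous_id).tendsto' _ _ (add_zero t)
  refine squeeze_zero' (.of_forall fun _ => dist_nonneg) ?_ hbound
  filter_upwards [hshift.eventually hnear] with s hs
  rw [add_sub_cancel_left] at hs
  calc dist 1 (expMap (s • γ' t)) = dist (γ t) (γ t * expMap (s • γ' t)) := by
        simpa using (dist_mul_left (γ t) 1 (expMap (s • γ' t))).symm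
    _ ≤ dist (γ (t + s)) (γ t) + dist (γ (t + s)) (γ t * expMap (s • γ' t)) :=
        dist_triangle_left _ _ _
    _ ≤ dist (γ (t + s)) (γ t) + |s| := by gcongr

lemma exists_isOpen_abs_dist_sub_dist_le [IsIsometricSMul G G] (h : IsC1H expMap γ γ' univ)
    (h0 : expMap 0 = 1) (hcont : Continuous fun p : ℝ × ℝ => expMap (p.1 • γ' p.2)) :
    ∃ U : Set ℝ, IsOpen U ∧ U.Nonempty ∧ ∀ u ∈ U, ∀ t ∈ U,
      |dist (γ t) (γ u) - dist 1 (expMap ((t - u) • γ' u))| ≤ |t - u| := by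
  have hγ : Continuous γ := continuousOn_univ.1 h.1
  let C : Set (ℝ × ℝ) :=
    {p | |dist (γ p.2) (γ p.1) - dist 1 (expMap ((p.2 - p.1) • γ' p.1))| ≤ |p.2 - p.1|}
  have hexp : Continuous fun p : ℝ × ℝ => expMap ((p.2 - p.1) • γ' p.1) :=
    hcont.comp (f := fun p : ℝ × ℝ => (p.2 - p.1, p.1)) (by fun_prop)
  have hC : IsClosed C := isClosed_le
    (((hγ.comp continuous_snd).dist (hγ.comp continuous_fst)).sub (continuous_const.dist hexp)).abs
    (by fun_prop)
  have hnear (u : ℝ) : ∀ᶠ t in 𝓝 u, (u, t) ∈ C := by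
    have hdist := h.eventually_dist_le h0 (mem_univ u)
    rw [nhdsWithin_univ] at hdist
    filter_upwards [hdist] with t ht
    have hleft := dist_mul_left (γ u) (expMap ((t - u) • γ' u)) 1
    rw [mul_one] at hleft
    rw [mem_ofPred, dist_comm 1, ← hleft]
    exact (abs_dist_sub_le _ _ _).trans ht
  obtain ⟨U, hU, hne, hsub⟩ := exists_isOpen_prod_self_subset_of_isClosed hC hnear
  exact ⟨U, hU, hne, fun u hu t ht => hsub (mk_mem_prod hu ht)⟩

end IsC1H

namespace IsExpLike

variable [IsIsometricSMul G G] {expMap : H → G} {v : H}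

lemma isBigO_dist_one_of_flow (he : IsExpLike expMap)
    (hflow : ∀ c : ℝ → ℝ, Continuous c → ∃ γ : ℝ → G, IsC1H expMap γ (fun t => c t • v) univ) :
    (fun s : ℝ => dist 1 (expMap (s • v))) =O[𝓝 0] fun s => s := by
  have hcont : Continuous fun s : ℝ => expMap (s • v) := by
    obtain ⟨γ, hγ⟩ := hflow (fun _ => 1) continuous_const
    exact he.continuous_smul_const (by simpa using hγ.tendsto_dist_one_smul he.map_zero 0)
  have hprofile (c : ℝ →ᵇ ℝ) : ∃ U : Set ℝ, IsOpen U ∧ U.Nonempty ∧ ∀ u ∈ U, ∀ u' ∈ U,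
      dist (dist 1 (expMap (((u - u') * c u) • v))) (dist 1 (expMap (((u - u') * c u') • v)))
        ≤ 2 * |u - u'| := by
    obtain ⟨γ, hγ⟩ := hflow c c.continuous
    have hexp : Continuous fun p : ℝ × ℝ => expMap (p.1 • c p.2 • v) := by
      simp only [smul_smul]
      exact hcont.comp (f := fun p : ℝ × ℝ => p.1 * c p.2) (by fun_prop)
    obtain ⟨U, hU, hne, hdist⟩ := hγ.exists_isOpen_abs_dist_sub_dist_le he.map_zero hexp
    refine ⟨U, hU, hne, fun u hu u' hu' => ?_⟩
    have hu_base := hdist u hu u' hu'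
    have hu'_base := hdist u' hu' u hu
    rw [← neg_sub u u', abs_neg, he.dist_one_neg_smul, dist_comm, smul_smul]
      at hu_base
    rw [smul_smul] at hu'_base
    calc _ ≤ |u - u'| + |u - u'| :=
          (dist_triangle_left _ _ (dist (γ u) (γ u'))).trans (add_le_add hu_base hu'_base)
      _ = 2 * |u - u'| := (two_mul _).symm
  have hO := isBigO_dist_apply_zero_of_profiles
    (f := fun s : ℝ => dist 1 (expMap (s • v))) (continuous_const.dist hcont) hprofile
  simpa [he.map_zero] using hO

lemma isC1H_smul_const (he : IsExpLike expMap)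
    (hlip : (fun s : ℝ => dist 1 (expMap (s • v))) =O[𝓝 0] fun s => s) {σ σ' : ℝ → ℝ} {s : Set ℝ}
    (hσ : ∀ t ∈ s, HasDerivWithinAt σ (σ' t) s t) (hσ' : ContinuousOn σ' s) :
    IsC1H expMap (fun t => expMap (σ t • v)) (fun t => σ' t • v) s := by
  have hcont : Continuous fun s : ℝ => expMap (s • v) :=
    he.continuous_smul_const (hlip.trans_tendsto tendsto_id)
  refine ⟨hcont.comp_continuousOn fun t ht => (hσ t ht).continuousWithinAt,
    hσ'.smul continuousOn_const, fun t ht => ?_⟩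
  have hrem := hasDerivWithinAt_iff_isLittleO.1 (hσ t ht)
  have hrem0 : Tendsto (fun u => σ u - σ t - (u - t) • σ' t) (𝓝[s] t) (𝓝 0) :=
    hrem.trans_tendsto
      (((continuous_id.sub continuous_const).tendsto' t 0 (sub_self t)).mono_left
        nhdsWithin_le_nhds)
  have hsmall := ((hlip.comp_tendsto hrem0).trans_isLittleO hrem).abs_right.tendsto_div_nhds_zero
  refine (hsmall.mono_left (nhdsWithin_mono t sdiff_subset)).congr fun u => ?_
  rw [Function.comp_apply, smul_smul, ← he, dist_comm (expMap _), he.dist_smul_smul, smul_eq_mul,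
    sub_sub]

end IsExpLike

/-- `g` is the value at time `T` of a horizontal `C¹` curve on `[0, T]` that starts at `1`, has
speed less than `ε`, and is at rest at both ends; these are the curves that can be concatenated
without losing `C¹` regularity. -/
def RestReachable (expMap : H → G) (ε T : ℝ) (g : G) : Prop :=
  ∃ β β', IsC1H expMap β β' (Icc 0 T) ∧ β 0 = 1 ∧ β' 0 = 0 ∧ β' T = 0 ∧
    (∀ t ∈ Icc (0 : ℝ) T, ‖β' t‖ < ε) ∧ g = β T

namespace RestReachable

variable {expMap : H → G} {ε : ℝ}

lemma one (h0 : expMap 0 = 1) (hε : 0 < ε) (T : ℝ) : RestReachable expMap ε T 1 :=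
  ⟨fun _ => 1, fun _ => 0, .const h0 1, rfl, rfl, rfl, fun _ _ => by simpa using hε, rfl⟩

variable [IsIsometricSMul G G]

lemma mul {S T : ℝ} (hS : 0 ≤ S) (hT : 0 ≤ T) {g h : G} (hg : RestReachable expMap ε S g)
    (hh : RestReachable expMap ε T h) : RestReachable expMap ε (S + T) (g * h) := by
  obtain ⟨β, β', hβ, hβ0, hβ'0, hβ'S, hβε, rfl⟩ := hg
  obtain ⟨α, α', hα, hα0, hα'0, hα'T, hαε, rfl⟩ := hh
  have htail : IsC1H expMap (fun u => β S * α (u - S)) (fun u => α' (u - S)) (Icc S (S + T)) := by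
    simpa [add_comm T] using (hα.comp_sub_const S).const_mul (β S)
  refine ⟨_, _, hβ.piecewise_Iic hS (le_add_of_nonneg_right hT) htail (by simp [hα0])
    (by simp [hβ'S, hα'0]), ?_, ?_, ?_, ?_, ?_⟩
  · rw [piecewise_eq_of_mem _ _ _ (mem_Iic.2 hS), hβ0]
  · rw [piecewise_eq_of_mem _ _ _ (mem_Iic.2 hS), hβ'0]
  · rw [piecewise_Iic_eqOn_Ici (by simp [hβ'S, hα'0]) (le_add_of_nonneg_right hT),
      add_sub_cancel_left, hα'T]
  · intro t ht
    rcases le_or_gt t S with htS | htS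
    · rw [piecewise_eq_of_mem _ _ _ (mem_Iic.2 htS)]
      exact hβε t ⟨ht.1, htS⟩
    · rw [piecewise_eq_of_notMem _ _ _ (notMem_Iic.2 htS)]
      exact hαε (t - S) ⟨sub_nonneg.2 htS.le, sub_le_iff_le_add'.2 ht.2⟩
  · rw [piecewise_Iic_eqOn_Ici (by simp [hα0]) (le_add_of_nonneg_right hT), add_sub_cancel_left]

lemma mono {S T : ℝ} (h0 : expMap 0 = 1) (hε : 0 < ε) (hS : 0 ≤ S) (hST : S ≤ T) {g : G}
    (hg : RestReachable expMap ε S g) : RestReachable expMap ε T g := by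
  simpa using hg.mul hS (sub_nonneg.2 hST) (one h0 hε (T - S))

/- The straight segment is traversed at the rate of the smoothstep polynomial `3x² - 2x³`, whose
derivative `6x(1 - x)` vanishes at `0` and `1` and is at most `3/2` between them. -/
lemma exp_smul (he : IsExpLike expMap) {v : H}
    (hlip : (fun s : ℝ => dist 1 (expMap (s • v))) =O[𝓝 0] fun s => s) (hv : 3 / 2 * ‖v‖ < ε)
    {τ : ℝ} (hτ : 0 < τ) : RestReachable expMap ε τ (expMap (τ • v)) := by
  let σ : ℝ → ℝ := fun u => τ * (3 * (u / τ) ^ 2 - 2 * (u / τ) ^ 3)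
  let σ' : ℝ → ℝ := fun u => 6 * (u / τ) * (1 - u / τ)
  have hσ (t : ℝ) : HasDerivAt σ (σ' t) t := by
    have hscale : HasDerivAt (fun u => u / τ) (1 / τ) t := (hasDerivAt_id t).div_const τ
    refine ((((hscale.pow 2).const_mul 3).sub ((hscale.pow 3).const_mul 2)).const_mul τ).congr_deriv
      ?_
    simp only [σ', Nat.cast_ofNat, Nat.reduceSub, pow_one]
    field_simp
    ring
  have hσ'_le : ∀ t ∈ Icc 0 τ, |σ' t| ≤ 3 / 2 := fun t ht => by
    have hx0 : 0 ≤ t / τ := div_nonneg ht.1 hτ.le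
    have hx1 : t / τ ≤ 1 := (div_le_one hτ).2 ht.2
    rw [abs_of_nonneg (mul_nonneg (by positivity) (sub_nonneg.2 hx1))]
    nlinarith [sq_nonneg (t / τ - 1 / 2)]
  refine ⟨_, _, he.isC1H_smul_const hlip (fun t _ => (hσ t).hasDerivWithinAt)
    (by fun_prop : Continuous σ').continuousOn, ?_, ?_, ?_, fun t ht => ?_, ?_⟩
  · simp [σ, he.map_zero]
  · simp [σ']
  · simp [σ', hτ.ne']
  · rw [norm_smul, Real.norm_eq_abs]
    exact (mul_le_mul_of_nonneg_right (hσ'_le t ht) (norm_nonneg v)).trans_lt hv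
  · simp only [σ, div_self hτ.ne']
    norm_num

lemma list_prod (he : IsExpLike expMap)
    (hlip : ∀ v : H, (fun s : ℝ => dist 1 (expMap (s • v))) =O[𝓝 0] fun s => s) (hε : 0 < ε)
    (L : List (ℝ × H)) (hL : ∀ p ∈ L, 0 < p.1 ∧ 3 / 2 * ‖p.2‖ < ε) :
    RestReachable expMap ε (L.map Prod.fst).sum (L.map fun p => expMap (p.1 • p.2)).prod := by
  induction L with
  | nil => exact one he.map_zero hε 0
  | cons p L ih =>
    obtain ⟨hp, hL⟩ := List.forall_mem_cons.1 hL
    have hsum : 0 ≤ (L.map Prod.fst).sum :=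
      List.sum_nonneg (by simpa using fun q v hq => (hL (q, v) hq).1.le)
    simpa using (exp_smul he (hlip p.2) hp.2 hp.1).mul hp.1.le hsum (ih hL)

end RestReachable

theorem zero_vector_pliable_general [IsIsometricSMul G G] {expMap : H → G}
    (hexp : IsExpLike expMap)
    (hlip : ∀ v : H, (fun s : ℝ => dist 1 (expMap (s • v))) =O[𝓝 0] fun s => s)
    (haccess : ∀ ε > 0, ∀ᶠ g in 𝓝 (1 : G), ∃ L : List (ℝ × H), (∀ p ∈ L, 0 < p.1 ∧ ‖p.2‖ < ε) ∧
      (L.map Prod.fst).sum ≤ 1 ∧ g = (L.map fun p => expMap (p.1 • p.2)).prod) :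
    ∀ ε > 0,
      {g : G | ∃ β β', IsC1H expMap β β' (Icc 0 1) ∧ β 0 = 1 ∧ β' 0 = 0 ∧ β' 1 = 0 ∧
        (∀ t ∈ Icc (0 : ℝ) 1, ‖β' t‖ < ε) ∧ g = β 1} ∈ 𝓝 (1 : G) := by
  intro ε hε
  filter_upwards [haccess (ε / (3 / 2)) (by positivity)]
  rintro _ ⟨L, hL, hsum, rfl⟩
  have hspeed : ∀ p ∈ L, 0 < p.1 ∧ 3 / 2 * ‖p.2‖ < ε := fun p hp =>
    ⟨(hL p hp).1, (lt_div_iff₀' (by norm_num)).1 (hL p hp).2⟩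
  have hnonneg : 0 ≤ (L.map Prod.fst).sum :=
    List.sum_nonneg (by simpa using fun q v hq => (hL (q, v) hq).1.le)
  exact (RestReachable.list_prod hexp hlip hε L hspeed).mono hexp.map_zero hε hnonneg hsum

/-- **The zero horizontal vector is pliable.** In a Carnot group (with the orbit-theorem
accessibility property, expressed by the hypothesis `hChow` on open families of piecewise
straight curves with small speeds), for every `ε > 0` the endpoints of horizontal `C¹`
curves `β` starting from `(0_G, 0)` with `‖β'‖_∞ < ε` form a neighborhood of `0_G`;
moreover one may additionally require `β'(1) = 0`. -/
theorem zero_vector_pliable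
    (expMap : H → G)
    (hleft : ∀ a p q : G, dist (a * p) (a * q) = dist p q)
    (hexpadd : ∀ (s t : ℝ) (v : H), expMap ((s + t) • v) = expMap (s • v) * expMap (t • v))
    -- Chow--Rashevskii/orbit theorem data: concatenations of straight curves with small
    -- speeds and total time less than 1 reach an (openly parametrized) neighborhood of 0_G
    (hChow : ∀ ε > 0, ∃ (k : ℕ) (V : Fin k → H) (t : Fin k → ℝ),
      (∀ i, 0 < t i) ∧ (∑ i, t i) < 1 ∧ (∀ i, ‖V i‖ < ε) ∧
      ∀ O ∈ 𝓝 t,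
        {g : G | ∃ τ ∈ O, (∀ i, 0 < τ i) ∧ (∑ i, τ i) < 1 ∧
          g = (List.ofFn fun i => expMap (τ i • V i)).prod} ∈ 𝓝 (1 : G))
    -- every continuous horizontal velocity profile integrates to a curve
    (hflow : ∀ (q : G) (v : ℝ → H), Continuous v →
      ∃ γ : ℝ → G, γ 0 = q ∧ IsC1H expMap γ v univ) :
    ∀ ε > 0,
      {g : G | ∃ β β', IsC1H expMap β β' (Icc 0 1) ∧ β 0 = 1 ∧ β' 0 = 0 ∧ β' 1 = 0 ∧
        (∀ t ∈ Icc (0:ℝ) 1, ‖β' t‖ < ε) ∧ g = β 1} ∈ 𝓝 (1 : G) := by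
  have : IsIsometricSMul G G := ⟨fun a => Isometry.of_dist_eq (hleft a)⟩
  have hexp : IsExpLike expMap := hexpadd
  refine zero_vector_pliable_general hexp (fun v => hexp.isBigO_dist_one_of_flow fun c hc => ?_)
    fun ε hε => ?_
  · obtain ⟨γ, -, hγ⟩ := hflow 1 (fun t => c t • v) (by fun_prop)
    exact ⟨γ, hγ⟩
  · obtain ⟨k, V, t, -, -, hV, hopen⟩ := hChow ε hε
    filter_upwards [hopen univ univ_mem]
    rintro g ⟨τ, -, hτ, hsum, rfl⟩
    refine ⟨List.ofFn fun i => (τ i, V i), ?_, ?_, ?_⟩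
    · simpa [List.forall_mem_ofFn_iff] using fun i => ⟨hτ i, hV i⟩
    · simpa [List.map_ofFn, List.sum_ofFn] using hsum.le
    · simp [List.map_ofFn, Function.comp_def]
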